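/- Let K be a compact metric space equipped with its Borel σ-algebra, and let U be a finite-dimensional subspace of the space C(K, ℝ) of continuous real-valued functions on K. On the set P(K) of Borel probability measures on K define a preorder by: ν ⪯ ν' iff ∫_K u² dν ≤ ∫_K u² dν' for every u ∈ U. Fix ν₁ ∈ P(K) and set M₁ = {ν ∈ P(K) : ν₁ ⪯ ν}. Then every nonempty chain C ⊆ M₁ has an upper bound in M₁, i.e. there exists σ ∈ M₁ with ν ⪯ σ for all ν ∈ C. -/

import Mathlib

open MeasureTheory Filter Topology

/-- The preorder on probability measures given by comparison of the integrals of `u ^ 2`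
for all `u` in a subspace `U` of continuous functions: `ν ⪯ ν'` iff
`∫ u² dν ≤ ∫ u² dν'` for every `u ∈ U`. -/
def sqPre {K : Type*} [TopologicalSpace K] [MeasurableSpace K]
    (U : Submodule ℝ C(K, ℝ)) (ν ν' : ProbabilityMeasure K) : Prop :=
  ∀ u ∈ U, ∫ x, (u x) ^ 2 ∂(ν : Measure K) ≤ ∫ x, (u x) ^ 2 ∂(ν' : Measure K)

theorem sqPre_refl {K : Type*} [TopologicalSpace K] [MeasurableSpace K]
    (U : Submodule ℝ C(K, ℝ)) (ν : ProbabilityMeasure K) : sqPre U ν ν :=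
  fun _ _ => le_rfl

theorem sqPre.trans {K : Type*} [TopologicalSpace K] [MeasurableSpace K]
    {U : Submodule ℝ C(K, ℝ)} {ν ν' ν'' : ProbabilityMeasure K}
    (h : sqPre U ν ν') (h' : sqPre U ν' ν'') : sqPre U ν ν'' :=
  fun u hu => (h u hu).trans (h' u hu)

/-- Upper sets of the form `{σ | ν ⪯ σ}` are weakly closed. -/
theorem isClosed_setOf_sqPre {K : Type*} [TopologicalSpace K] [CompactSpace K]
    [MeasurableSpace K] [OpensMeasurableSpace K]
    (U : Submodule ℝ C(K, ℝ)) (ν : ProbabilityMeasure K) :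
    IsClosed {σ : ProbabilityMeasure K | sqPre U ν σ} := by
  simp only [sqPre, Set.ofPred_forall]
  refine isClosed_iInter fun u => isClosed_iInter fun _ => ?_
  exact isClosed_le continuous_const
    (ProbabilityMeasure.continuous_integral_continuousMap (u ^ 2))

theorem chain_has_upper_bound
    {K : Type*} [MetricSpace K] [CompactSpace K] [MeasurableSpace K] [BorelSpace K]
    (U : Submodule ℝ C(K, ℝ)) [FiniteDimensional ℝ U]
    (ν₁ : ProbabilityMeasure K) :
    ∀ C : Set (ProbabilityMeasure K),
      C ⊆ {ν : ProbabilityMeasure K | sqPre U ν₁ ν} → C.Nonempty → IsChain (sqPre U) C →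
      ∃ σ : ProbabilityMeasure K, sqPre U ν₁ σ ∧ ∀ ν ∈ C, sqPre U ν σ := by
  intro C hC hne hchain
  have : Nonempty C := hne.to_subtype
  have hdir : Directed (· ⊇ ·)
      fun ν : C => {σ : ProbabilityMeasure K | sqPre U ν σ} := by
    intro a b
    by_cases hab : a = b
    · exact ⟨a, subset_rfl, hab ▸ subset_rfl⟩
    · rcases hchain a.2 b.2 (Subtype.coe_ne_coe.2 hab) with h | h
      · exact ⟨b, fun σ hσ => h.trans hσ, subset_rfl⟩
      · exact ⟨a, subset_rfl, fun σ hσ => h.trans hσ⟩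
  obtain ⟨σ, hσ⟩ := IsCompact.nonempty_iInter_of_directed_nonempty_isCompact_isClosed
    _ hdir (fun ν => ⟨ν, sqPre_refl U ν⟩)
    (fun ν => (isClosed_setOf_sqPre U ν).isCompact) (fun ν => isClosed_setOf_sqPre U ν)
  have hub : ∀ ν ∈ C, sqPre U ν σ := fun ν hν => Set.mem_iInter.1 hσ ⟨ν, hν⟩
  obtain ⟨ν, hν⟩ := hne
  exact ⟨σ, sqPre.trans (hC hν) (hub ν hν), hub⟩
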